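/- Let (Ω, 𝓕) be a measurable space, 𝓛∞ the bounded measurable functions Ω → ℝ, and (P_t)_{t ≥ 0} a Markov semigroup on 𝓛∞ (each P_t linear and bounded, P_{t+s} = P_t P_s, P_t preserves nonnegativity, P_t 𝟙 = 𝟙) which is continuous under bounded monotone convergence (if 0 ≤ φ_n ↑ φ pointwise with φ bounded, then P_t φ_n ↑ P_t φ pointwise). Let μ and ν be invariant probability measures for P_t with μ not absolutely continuous with respect to ν. Define μ_s⁰ := (dμ/d(μ+ν)) · 𝟙_{{dν/d(μ+ν) = 0}} · (μ + ν) and μ_s := μ_s⁰ / μ_s⁰(Ω). Then μ_s is a probability measure invariant for P_t, and μ_s ⊥ ν. -/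

import Mathlib

/-!
Let `A = {dν/d(μ+ν) = 0}`. Then `ν A = 0`, the measure `μs0` is `μ.restrict A`, and `μ.restrict Aᶜ ≪ ν`
(`restrict_compl_rnDeriv_zero_ac`), so singularity is clear and `μ A ≠ 0` because `μ` is not absolutely
continuous with respect to `ν`.

For invariance, look at `p = P_t 𝟙_A`, which takes values in `[0, 1]`. Since `∫ p dν = ν A = 0`, `p`
vanishes `ν`-a.e., hence `μ`-a.e. on `Aᶜ`. Then `∫_A p dμ = ∫ p dμ = μ A` forces `p = 1` `μ`-a.e. on `A`:
the set `A` is invariant under the dynamics up to `μ`-null sets. By positivity, `P_t (φ 𝟙_A)` vanishes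
`μ`-a.e. on `Aᶜ` and `P_t (φ 𝟙_{Aᶜ})` vanishes `μ`-a.e. on `A`, so
`∫_A P_t φ dμ = ∫_A P_t (φ 𝟙_A) dμ = ∫ P_t (φ 𝟙_A) dμ = ∫_A φ dμ`.
-/

open MeasureTheory Filter Topology

section

variable {Ω : Type*} [MeasurableSpace Ω]

/-- A function `φ : Ω → ℝ` is bounded and measurable. -/
def IsBddBorel {Ω : Type*} [MeasurableSpace Ω] (φ : Ω → ℝ) : Prop :=
  Measurable φ ∧ ∃ M : ℝ, ∀ x, |φ x| ≤ M

/-- `P` is a Markov semigroup on the bounded measurable functions. -/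
structure IsMarkovSemigroup {Ω : Type*} [MeasurableSpace Ω]
    (P : ℝ → (Ω → ℝ) → (Ω → ℝ)) : Prop where
  preserves : ∀ t, 0 ≤ t → ∀ φ : Ω → ℝ, IsBddBorel φ → IsBddBorel (P t φ)
  add : ∀ t, 0 ≤ t → ∀ φ ψ : Ω → ℝ, IsBddBorel φ → IsBddBorel ψ →
    P t (fun x => φ x + ψ x) = fun x => P t φ x + P t ψ x
  smul : ∀ t, 0 ≤ t → ∀ (c : ℝ) (φ : Ω → ℝ), IsBddBorel φ →
    P t (fun x => c * φ x) = fun x => c * P t φ x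
  comp : ∀ t, 0 ≤ t → ∀ s, 0 ≤ s → ∀ φ : Ω → ℝ, IsBddBorel φ →
    P (t + s) φ = P t (P s φ)
  pos : ∀ t, 0 ≤ t → ∀ φ : Ω → ℝ, IsBddBorel φ → (∀ x, 0 ≤ φ x) → ∀ x, 0 ≤ P t φ x
  map_one : ∀ t, 0 ≤ t → P t (fun _ => (1 : ℝ)) = fun _ => 1

/-- A probability measure `μ` is invariant for the Markov semigroup `P`. -/
def IsInvariantMeasure {Ω : Type*} [MeasurableSpace Ω]
    (P : ℝ → (Ω → ℝ) → (Ω → ℝ)) (μ : Measure Ω) : Prop :=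
  ∀ t, 0 ≤ t → ∀ φ : Ω → ℝ, IsBddBorel φ → ∫ x, P t φ x ∂μ = ∫ x, φ x ∂μ

theorem IsBddBorel.add {f g : Ω → ℝ} (hf : IsBddBorel f) (hg : IsBddBorel g) :
    IsBddBorel (fun x => f x + g x) := by
  obtain ⟨hfm, M, hM⟩ := hf
  obtain ⟨hgm, N, hN⟩ := hg
  exact ⟨hfm.add hgm, M + N, fun x => (abs_add_le _ _).trans (add_le_add (hM x) (hN x))⟩

theorem IsBddBorel.const_mul {f : Ω → ℝ} (hf : IsBddBorel f) (c : ℝ) :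
    IsBddBorel (fun x => c * f x) := by
  obtain ⟨hfm, M, hM⟩ := hf
  refine ⟨hfm.const_mul c, |c| * M, fun x => ?_⟩
  rw [abs_mul]
  exact mul_le_mul_of_nonneg_left (hM x) (abs_nonneg c)

theorem IsBddBorel.indicator {f : Ω → ℝ} (hf : IsBddBorel f) {A : Set Ω}
    (hA : MeasurableSet A) : IsBddBorel (A.indicator f) := by
  obtain ⟨hfm, M, hM⟩ := hf
  refine ⟨hfm.indicator hA, M, fun x => ?_⟩
  by_cases hx : x ∈ A
  · simpa [hx] using hM x
  · simpa [hx] using (abs_nonneg _).trans (hM x)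

theorem isBddBorel_one : IsBddBorel (fun _ : Ω => (1 : ℝ)) :=
  ⟨measurable_const, 1, fun _ => by simp⟩

theorem IsBddBorel.integrable {f : Ω → ℝ} (hf : IsBddBorel f) (μ : Measure Ω)
    [IsFiniteMeasure μ] : Integrable f μ := by
  obtain ⟨hfm, M, hM⟩ := hf
  exact Integrable.of_bound hfm.aestronglyMeasurable M (ae_of_all _ hM)

theorem IsMarkovSemigroup.mono {P : ℝ → (Ω → ℝ) → (Ω → ℝ)} (hP : IsMarkovSemigroup P)
    {t : ℝ} (ht : 0 ≤ t) {f g : Ω → ℝ} (hf : IsBddBorel f) (hg : IsBddBorel g)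
    (hfg : ∀ x, f x ≤ g x) (x : Ω) : P t f x ≤ P t g x := by
  have h := hP.pos t ht _ (hg.add (hf.const_mul (-1))) (fun x => by linarith [hfg x]) x
  rw [hP.add t ht _ _ hg (hf.const_mul (-1)), hP.smul t ht _ _ hf] at h
  linarith

/-- Positivity turns the pointwise bound `|φ 𝟙_A| ≤ M 𝟙_A` into a bound on the images, so
`P_t (φ 𝟙_A)` vanishes wherever `P_t 𝟙_A` does. -/
theorem IsMarkovSemigroup.map_indicator_eq_zero {P : ℝ → (Ω → ℝ) → (Ω → ℝ)}
    (hP : IsMarkovSemigroup P) {t : ℝ} (ht : 0 ≤ t) {φ : Ω → ℝ} (hφ : IsBddBorel φ)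
    {A : Set Ω} (hA : MeasurableSet A) {x : Ω}
    (hx : P t (A.indicator fun _ => (1 : ℝ)) x = 0) : P t (A.indicator φ) x = 0 := by
  obtain ⟨M, hM⟩ := hφ.2
  have h1 := isBddBorel_one.indicator hA
  have hup := hP.mono ht (hφ.indicator hA) (h1.const_mul M) (fun y => by
    by_cases hy : y ∈ A
    · simpa [hy] using (abs_le.1 (hM y)).2
    · simp [hy]) x
  have hlo := hP.mono ht (h1.const_mul (-M)) (hφ.indicator hA) (fun y => by
    by_cases hy : y ∈ A
    · simpa [hy] using (abs_le.1 (hM y)).1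
    · simp [hy]) x
  rw [hP.smul t ht _ _ h1] at hup hlo
  simp only [hx, mul_zero] at hup hlo
  exact le_antisymm hup hlo

theorem IsMarkovSemigroup.map_indicator_add_compl {P : ℝ → (Ω → ℝ) → (Ω → ℝ)}
    (hP : IsMarkovSemigroup P) {t : ℝ} (ht : 0 ≤ t) {φ : Ω → ℝ} (hφ : IsBddBorel φ)
    {A : Set Ω} (hA : MeasurableSet A) (x : Ω) :
    P t φ x = P t (A.indicator φ) x + P t (Aᶜ.indicator φ) x := by
  have h := congrFun (hP.add t ht _ _ (hφ.indicator hA) (hφ.indicator hA.compl)) x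
  have h2 : (fun x => A.indicator φ x + Aᶜ.indicator φ x) = φ :=
    Set.indicator_self_add_compl A φ
  rwa [h2] at h

/-- A `ν`-null set `A` off which `μ` is absolutely continuous with respect to `ν` carries an
invariant part of `μ`. -/
theorem setIntegral_map_eq {P : ℝ → (Ω → ℝ) → (Ω → ℝ)} (hP : IsMarkovSemigroup P)
    {μ ν : Measure Ω} [IsFiniteMeasure μ] [IsFiniteMeasure ν]
    (hμ : IsInvariantMeasure P μ) (hν : IsInvariantMeasure P ν)
    {A : Set Ω} (hA : MeasurableSet A) (hνA : ν A = 0) (hac : μ.restrict Aᶜ ≪ ν)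
    {t : ℝ} (ht : 0 ≤ t) {φ : Ω → ℝ} (hφ : IsBddBorel φ) :
    ∫ x in A, P t φ x ∂μ = ∫ x in A, φ x ∂μ := by
  have h1 : IsBddBorel (A.indicator fun _ => (1 : ℝ)) := isBddBorel_one.indicator hA
  have hp := hP.preserves t ht _ h1
  have hp0 := hP.pos t ht _ h1 (Set.indicator_nonneg fun _ _ => zero_le_one)
  set p := P t (A.indicator fun _ => (1 : ℝ)) with hp_def
  have hsplit : ∀ x, p x + P t (Aᶜ.indicator fun _ => (1 : ℝ)) x = 1 := fun x => by
    rw [hp_def, ← hP.map_indicator_add_compl ht isBddBorel_one hA, hP.map_one t ht]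
  have hp1 : ∀ x, p x ≤ 1 := fun x => by
    have := hP.pos t ht _ (isBddBorel_one.indicator hA.compl)
      (Set.indicator_nonneg fun _ _ => zero_le_one) x
    linarith [hsplit x]
  have hpν : p =ᵐ[ν] 0 := by
    rw [← integral_eq_zero_iff_of_nonneg hp0 (hp.integrable ν), hν t ht _ h1,
      integral_indicator hA]
    simp [Measure.real, hνA]
  have hpc : p =ᵐ[μ.restrict Aᶜ] 0 := hac.ae_le hpν
  have hpA : ∫ x in A, p x ∂μ = ∫ x in A, (1 : ℝ) ∂μ := by
    have h := hμ t ht _ h1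
    rw [integral_indicator hA, ← integral_add_compl hA (hp.integrable μ),
      integral_congr_ae hpc] at h
    simpa only [Pi.zero_apply, integral_zero, add_zero] using h
  have hpA1 : ∀ᵐ x ∂μ.restrict A, p x = 1 := by
    have h0 : (fun x => 1 - p x) =ᵐ[μ.restrict A] 0 := by
      rw [← integral_eq_zero_iff_of_nonneg (fun x => sub_nonneg.2 (hp1 x))
        ((integrable_const _).sub (hp.integrable _)),
        integral_sub (integrable_const _) (hp.integrable _), hpA, sub_self]
    filter_upwards [h0] with x hx
    simp only [Pi.zero_apply] at hx
    linarith
  have hφA := hφ.indicator hA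
  calc ∫ x in A, P t φ x ∂μ = ∫ x in A, P t (A.indicator φ) x ∂μ := by
        refine integral_congr_ae ?_
        filter_upwards [hpA1] with x hx
        rw [hP.map_indicator_add_compl ht hφ hA x,
          hP.map_indicator_eq_zero ht hφ hA.compl (by linarith [hsplit x]), add_zero]
    _ = ∫ x, P t (A.indicator φ) x ∂μ := by
        have h0 : P t (A.indicator φ) =ᵐ[μ.restrict Aᶜ] 0 := by
          filter_upwards [hpc] with x hx
          exact hP.map_indicator_eq_zero ht hφ hA hx
        rw [← integral_add_compl hA ((hP.preserves t ht _ hφA).integrable μ),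
          integral_congr_ae h0]
        simp
    _ = ∫ x in A, φ x ∂μ := by rw [hμ t ht _ hφA, integral_indicator hA]

theorem measure_rnDeriv_eq_zero (μ ν : Measure Ω) [IsFiniteMeasure μ] [IsFiniteMeasure ν] :
    ν {x | ν.rnDeriv (μ + ν) x = 0} = 0 := by
  have hA : MeasurableSet {x | ν.rnDeriv (μ + ν) x = 0} :=
    Measure.measurable_rnDeriv _ _ (measurableSet_singleton 0)
  have hν : ν ≪ μ + ν := (Measure.le_add_left le_rfl).absolutelyContinuous
  rw [← Measure.setLIntegral_rnDeriv hν, setLIntegral_congr_fun hA (g := fun _ => 0)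
    (fun x hx => hx)]
  simp

/-- Where `dν/d(μ+ν)` is positive, a `ν`-null set is `(μ+ν)`-null, hence `μ`-null. -/
theorem restrict_compl_rnDeriv_zero_ac (μ ν : Measure Ω) [IsFiniteMeasure μ]
    [IsFiniteMeasure ν] : μ.restrict {x | ν.rnDeriv (μ + ν) x = 0}ᶜ ≪ ν := by
  have hν : ν ≪ μ + ν := (Measure.le_add_left le_rfl).absolutelyContinuous
  refine Measure.AbsolutelyContinuous.mk fun E hE hE0 => ?_
  rw [Measure.restrict_apply hE]
  have h0 := Measure.setLIntegral_rnDeriv (s := E) hν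
  rw [hE0, lintegral_eq_zero_iff (Measure.measurable_rnDeriv _ _), Filter.EventuallyEq,
    ae_restrict_iff' hE, ae_iff] at h0
  refine (Measure.le_add_right (le_refl μ)).absolutelyContinuous (measure_mono_null ?_ h0)
  rintro x ⟨hxE, hx⟩ h
  exact hx (h hxE)

/-- The standard argument from the proof of Theorem 2.6 (see also [FoToerg, Lemma 5.11]):
if `μ, ν` are invariant probability measures for a Markov semigroup `P_t` which is
continuous under bounded monotone convergence, and `μ` is not absolutely continuous with
respect to `ν`, then the normalized singular part
`μ_s = μ_s⁰ / μ_s⁰(Ω)`, where `μ_s⁰ = (dμ/d(μ+ν)) 𝟙_{dν/d(μ+ν) = 0} (μ+ν)`, is an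
invariant probability measure which is mutually singular with `ν`. -/
theorem singular_part_invariant
    (P : ℝ → (Ω → ℝ) → (Ω → ℝ)) (hP : IsMarkovSemigroup P)
    (hmono : ∀ t, 0 ≤ t → ∀ (φn : ℕ → Ω → ℝ) (φ : Ω → ℝ),
      (∀ n, IsBddBorel (φn n)) → IsBddBorel φ →
      (∀ n x, 0 ≤ φn n x) → (∀ n x, φn n x ≤ φn (n + 1) x) →
      (∀ x, Tendsto (fun n => φn n x) atTop (𝓝 (φ x))) →
      ∀ x, Tendsto (fun n => P t (φn n) x) atTop (𝓝 (P t φ x)))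
    (μ ν : Measure Ω) [IsProbabilityMeasure μ] [IsProbabilityMeasure ν]
    (hμinv : IsInvariantMeasure P μ) (hνinv : IsInvariantMeasure P ν)
    (hnac : ¬ μ ≪ ν) :
    ∀ μs0 : Measure Ω,
      μs0 = (μ + ν).withDensity
          ({x | ν.rnDeriv (μ + ν) x = 0}.indicator (μ.rnDeriv (μ + ν))) →
      IsProbabilityMeasure ((μs0 Set.univ)⁻¹ • μs0) ∧
      IsInvariantMeasure P ((μs0 Set.univ)⁻¹ • μs0) ∧
      ((μs0 Set.univ)⁻¹ • μs0) ⟂ₘ ν := by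
  rintro μs0 rfl
  set A := {x | ν.rnDeriv (μ + ν) x = 0} with hA_def
  have hA : MeasurableSet A := Measure.measurable_rnDeriv _ _ (measurableSet_singleton 0)
  have hνA : ν A = 0 := measure_rnDeriv_eq_zero μ ν
  have hac : μ.restrict Aᶜ ≪ ν := restrict_compl_rnDeriv_zero_ac μ ν
  have hμ : μ ≪ μ + ν := (Measure.le_add_right le_rfl).absolutelyContinuous
  have hμs : (μ + ν).withDensity (A.indicator (μ.rnDeriv (μ + ν))) = μ.restrict A := by
    rw [withDensity_indicator hA, ← restrict_withDensity hA, Measure.withDensity_rnDeriv_eq _ _ hμ]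
  have hμA : μ A ≠ 0 := fun h => hnac <| by
    rw [← Measure.restrict_add_restrict_compl (μ := μ) hA, Measure.restrict_eq_zero.2 h, zero_add]
    exact hac
  rw [hμs, Measure.restrict_apply_univ]
  refine ⟨⟨?_⟩, ?_, ?_⟩
  · simp [ENNReal.inv_mul_cancel hμA (measure_ne_top μ A)]
  · intro t ht φ hφ
    rw [integral_smul_measure, integral_smul_measure,
      setIntegral_map_eq hP hμinv hνinv hA hνA hac ht hφ]
  · refine Measure.MutuallySingular.smul _ ⟨Aᶜ, hA.compl, ?_, ?_⟩
    · simp [Measure.restrict_apply hA.compl]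
    · simpa using hνA

end
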